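/- Let b₁ < 0 < b₂, B = diag(b₁,b₂), and Q(x) = [[0,Q₁₂(x)],[Q₂₁(x),0]] with Q₁₂, Q₂₁ ∈ L¹[0,1]. Let Φ(·,λ) and Ψ(·,λ) be the fundamental matrix solutions (with value I₂ at 0) of −i B⁻¹ y′ + Q(x) y = λ y and of the adjoint system −i B⁻¹ y′ + Q*(x) y = λ y, with columns Φ_j(·,λ), Ψ_j(·,λ). Fix h > 0. Then, as λ → ∞ with |Im λ| ≤ h: (1) ⟨Φ_j(·,λ), Ψ_k(·, conj(λ))⟩_{L²([0,1];ℂ²)} = δ_{jk} + o(1) for j,k ∈ {1,2}; (2) ⟨Φ₁(·,λ), Φ₂(·,λ)⟩ = o(1); (3) there exist M > 0 and constants C₁, C₂ > 0 such that C₁ < ‖Φ_j(·,λ)‖²_{L²([0,1];ℂ²)} < C₂ for all λ with |Im λ| ≤ h, |λ| > M, and j ∈ {1,2}. -/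

import Mathlib

/-!
Everything follows from one asymptotic formula (`fundSol_asymp`): as `λ → ∞` in the strip
`|Im λ| ≤ h`, the fundamental matrix `Φ(x, λ)` converges, uniformly in `x ∈ [0,1]`, to the
fundamental matrix `diag(e^{i b₁ λ x}, e^{i b₂ λ x})` of the system without potential
(`freeSol`). Its entries are bounded above and its diagonal entries bounded away from zero in the
strip, its columns are pointwise orthogonal, and
`e^{i b λ x} * conj (e^{i b (conj λ) x}) = 1`; so the claims on inner products and norms are
read off by integrating a uniform estimate (`inner_close`).

For the formula, let `(y, z)` be a column with `y(0) = 1`, `z(0) = 0`, belonging to the diagonal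
entries `b`, `c` of `B`. The functions `u = e^{-i b λ x} y` and `v = e^{-i c λ x} z` satisfy
`u' = p v`, `v' = q u`, where `p` and `q` are the entries of the potential times oscillating
factors `e^{± i (c - b) λ x}`; they are bounded in `L¹` uniformly in the strip. Gronwall's
inequality (`gronwall_integrable`) bounds `u` and `v`. With `G(x) = ∫₀ˣ q`, integration by parts
gives `v = G u - ∫ G p v`, and then `u - 1 = ∫ p v`, so both `v` and `u - 1` are bounded by a
constant times `sup |G|` (`coupled_bound`). Finally `sup |G| → 0` by a Riemann–Lebesgue lemma
uniform in the strip and in the upper limit (`riemann_lebesgue_strip`), where `b₁ ≠ b₂` enters.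

The solutions are only absolutely continuous, so the calculus is done with the predicate
`IsPrim f g` (`f` is a primitive of the integrable function `g` on `[0,1]`) and its product rule
`IsPrim.mul`.
-/

open MeasureTheory Set Complex Filter ComplexConjugate
open scoped ENNReal NNReal

noncomputable section

/-- Lebesgue measure restricted to `[0,1]`. -/
def μ01 : Measure ℝ := volume.restrict (Set.Icc (0:ℝ) 1)

/-- `y` is a `W^{1,1}` solution on `[0,1]` of the Dirac type system
`-i B⁻¹ y' + Q(x) y = λ y`, with `B = diag(b₁,b₂)` and `Q = [[0,Q₁₂],[Q₂₁,0]]`. -/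
def IsSol (b₁ b₂ : ℝ) (Q₁₂ Q₂₁ : ℝ → ℂ) (l : ℂ) (y : ℝ → Fin 2 → ℂ) : Prop :=
  ∃ g : ℝ → Fin 2 → ℂ,
    (∀ i, IntegrableOn (fun t => g t i) (Set.Icc (0:ℝ) 1)) ∧
    (∀ x ∈ Set.Icc (0:ℝ) 1, ∀ i, y x i = y 0 i + ∫ t in (0:ℝ)..x, g t i) ∧
    (∀ᵐ x ∂μ01,
      -Complex.I * ((b₁:ℂ))⁻¹ * g x 0 + Q₁₂ x * y x 1 = l * y x 0 ∧
      -Complex.I * ((b₂:ℂ))⁻¹ * g x 1 + Q₂₁ x * y x 0 = l * y x 1)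

/-- `Φ` is the fundamental matrix solution of `-i B⁻¹ Y' + Q Y = λ Y`, `Φ(0,λ) = I₂`;
`Φ l x j k` is the entry `φ_{jk}(x,λ)` and the `k`-th column solves the system. -/
def IsFundSol (b₁ b₂ : ℝ) (Q₁₂ Q₂₁ : ℝ → ℂ) (Φ : ℂ → ℝ → Fin 2 → Fin 2 → ℂ) : Prop :=
  ∀ l : ℂ, (∀ j k : Fin 2, Φ l 0 j k = if j = k then 1 else 0) ∧
    ∀ k : Fin 2, IsSol b₁ b₂ Q₁₂ Q₂₁ l (fun x j => Φ l x j k)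

/-! ### Primitives of integrable functions on `[0,1]` -/

/-- `f` is on `[0,1]` a primitive of the integrable function `g`, i.e. `f` is absolutely
continuous there with a.e. derivative `g`. -/
def IsPrim {E : Type*} [NormedAddCommGroup E] [NormedSpace ℝ E] (f g : ℝ → E) : Prop :=
  IntervalIntegrable g volume 0 1 ∧ ∀ x ∈ Icc (0:ℝ) 1, f x = f 0 + ∫ t in (0:ℝ)..x, g t

lemma absCont_of_dist_le {X : Type*} [PseudoMetricSpace X] {f : ℝ → X} {φ : ℝ → ℝ} {a b K : ℝ}
    (hφ : AbsolutelyContinuousOnInterval φ a b)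
    (h : ∀ x ∈ uIcc a b, ∀ y ∈ uIcc a b, dist (f x) (f y) ≤ K * dist (φ x) (φ y)) :
    AbsolutelyContinuousOnInterval f a b := by
  unfold AbsolutelyContinuousOnInterval at *
  refine squeeze_zero' (Eventually.of_forall fun t => Finset.sum_nonneg fun _ _ => dist_nonneg) ?_
    (by simpa using hφ.const_mul K)
  refine eventually_inf_principal.2 (Eventually.of_forall fun E hE => ?_)
  rw [Finset.mul_sum]
  refine Finset.sum_le_sum fun i hi => ?_
  have := hE.1 i hi
  exact h _ this.1 _ this.2

lemma intervalIntegrable_sub {E : Type*} [NormedAddCommGroup E] {g : ℝ → E}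
    (hg : IntervalIntegrable g volume 0 1) {x y : ℝ}
    (hx : x ∈ Icc (0:ℝ) 1) (hy : y ∈ Icc (0:ℝ) 1) : IntervalIntegrable g volume x y :=
  hg.mono_set (uIcc_subset_uIcc (by simpa using hx) (by simpa using hy))

lemma absCont_integral {E : Type*} [NormedAddCommGroup E] [NormedSpace ℝ E] {g : ℝ → E} (c : E)
    (hg : IntervalIntegrable g volume 0 1) :
    AbsolutelyContinuousOnInterval (fun x => c + ∫ t in (0:ℝ)..x, g t) 0 1 := by
  have h1 := hg.norm.absolutelyContinuousOnInterval_intervalIntegral (c := 0) (by simp)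
  refine absCont_of_dist_le (K := 1) h1 fun x hx y hy => ?_
  rw [uIcc_of_le zero_le_one] at hx hy
  have h0 : (0:ℝ) ∈ Icc (0:ℝ) 1 := by simp
  rw [dist_add_left, dist_eq_norm, dist_eq_norm, one_mul,
    intervalIntegral.integral_interval_sub_left (intervalIntegrable_sub hg h0 hx)
      (intervalIntegrable_sub hg h0 hy),
    intervalIntegral.integral_interval_sub_left (intervalIntegrable_sub hg.norm h0 hx)
      (intervalIntegrable_sub hg.norm h0 hy)]
  exact intervalIntegral.norm_integral_le_abs_integral_norm

/-- The fundamental theorem of calculus for absolutely continuous functions with values in a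
Banach space. -/
lemma isPrim_of_absCont {E : Type*} [NormedAddCommGroup E] [NormedSpace ℝ E] [CompleteSpace E]
    {f g : ℝ → E} (hg : IntervalIntegrable g volume 0 1)
    (hf : AbsolutelyContinuousOnInterval f 0 1)
    (hd : ∀ᵐ x, x ∈ uIcc (0:ℝ) 1 → HasDerivAt f (g x) x) : IsPrim f g := by
  refine ⟨hg, fun x hx => ?_⟩
  have h1 : AbsolutelyContinuousOnInterval (fun x => f x - (f 0 + ∫ t in (0:ℝ)..x, g t)) 0 1 :=
    hf.sub (absCont_integral (f 0) hg)
  obtain ⟨C, hC⟩ := h1.const_of_ae_hasDerivAt_zero (by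
    filter_upwards [hd, hg.ae_hasDerivAt_integral] with x h1 h2 h3
    have := (h1 h3).fun_sub ((h2 h3 0 (by simp)).const_add (f 0))
    rwa [sub_self] at this)
  have h2 := hC 0 (by simp)
  have h3 := hC x (by simpa using hx)
  simp only [intervalIntegral.integral_same, add_zero, sub_self] at h2
  rw [← h2] at h3
  exact sub_eq_zero.1 h3

/-- Outside `[0,1]` a function with `IsPrim f g` is arbitrary; this lemma replaces it by an
honest antiderivative. -/
lemma IsPrim.exists_extension {E : Type*} [NormedAddCommGroup E] [NormedSpace ℝ E] [CompleteSpace E]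
    {f g : ℝ → E} (h : IsPrim f g) :
    ∃ F : ℝ → E, (∀ x ∈ Icc (0:ℝ) 1, f x = F x) ∧ AbsolutelyContinuousOnInterval F 0 1 ∧
      ∀ᵐ x, x ∈ uIcc (0:ℝ) 1 → HasDerivAt F (g x) x := by
  refine ⟨fun x => f 0 + ∫ t in (0:ℝ)..x, g t, h.2, ?_, ?_⟩
  · exact absCont_integral _ h.1
  · filter_upwards [h.1.ae_hasDerivAt_integral] with x h2 h3
    exact (h2 h3 0 (by simp)).const_add _

lemma IsPrim.continuousOn {E : Type*} [NormedAddCommGroup E] [NormedSpace ℝ E] [CompleteSpace E]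
    {f g : ℝ → E} (h : IsPrim f g) : ContinuousOn f (Icc 0 1) := by
  obtain ⟨F, h1, h2, -⟩ := h.exists_extension
  have := h2.continuousOn
  rw [uIcc_of_le zero_le_one] at this
  exact this.congr h1

lemma IsPrim.congr_ae {E : Type*} [NormedAddCommGroup E] [NormedSpace ℝ E]
    {f g g' : ℝ → E} (h : IsPrim f g)
    (hg : ∀ᵐ x, x ∈ Icc (0:ℝ) 1 → g x = g' x) : IsPrim f g' := by
  refine ⟨h.1.congr_ae ?_, fun x hx => ?_⟩
  · refine (ae_restrict_iff' measurableSet_uIoc).2 ?_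
    filter_upwards [hg] with x hx h2
    rw [uIoc_of_le zero_le_one] at h2
    exact hx (Ioc_subset_Icc_self h2)
  · rw [h.2 x hx]
    congr 1
    refine intervalIntegral.integral_congr_ae ?_
    filter_upwards [hg] with t ht h2
    rw [uIoc_of_le hx.1] at h2
    exact ht ⟨h2.1.le, h2.2.trans hx.2⟩

lemma IntervalIntegrable.mul_cont {𝕜 : Type*} [RCLike 𝕜] {f g : ℝ → 𝕜}
    (hg : IntervalIntegrable g volume 0 1) (hf : ContinuousOn f (Icc 0 1)) :
    IntervalIntegrable (fun x => g x * f x) volume 0 1 :=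
  hg.mul_continuousOn (by rwa [uIcc_of_le zero_le_one])

/-- The product rule; equivalently, integration by parts. -/
lemma IsPrim.mul {𝕜 : Type*} [RCLike 𝕜] {f g F G : ℝ → 𝕜} (h : IsPrim f g) (H : IsPrim F G) :
    IsPrim (fun x => f x * F x) (fun x => g x * F x + G x * f x) := by
  have hint : IntervalIntegrable (fun x => g x * F x + G x * f x) volume 0 1 :=
    (h.1.mul_cont H.continuousOn).add (H.1.mul_cont h.continuousOn)
  obtain ⟨f', h1, h2, h3⟩ := h.exists_extension
  obtain ⟨F', H1, H2, H3⟩ := H.exists_extension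
  have key : IsPrim (fun x => f' x * F' x) (fun x => g x * F x + G x * f x) := by
    refine isPrim_of_absCont hint (h2.smul H2) ?_
    filter_upwards [h3, H3] with x hx Hx hm
    have hm' : x ∈ Icc (0:ℝ) 1 := by simpa using hm
    rw [h1 x hm', H1 x hm', mul_comm (G x)]
    exact (hx hm).fun_mul (Hx hm)
  have h0 : (0:ℝ) ∈ Icc (0:ℝ) 1 := by simp
  refine ⟨hint, fun x hx => ?_⟩
  simp only [h1 x hx, H1 x hx, h1 0 h0, H1 0 h0]
  exact key.2 x hx

lemma isPrim_of_hasDerivAt {E : Type*} [NormedAddCommGroup E] [NormedSpace ℝ E] [CompleteSpace E]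
    {f g : ℝ → E} (hf : ∀ x, HasDerivAt f (g x) x)
    (hg : Continuous g) : IsPrim f g := by
  refine ⟨hg.intervalIntegrable _ _, fun x _ => ?_⟩
  rw [intervalIntegral.integral_eq_sub_of_hasDerivAt (fun t _ => hf t) (hg.intervalIntegrable _ _)]
  abel

lemma IsPrim.exp {f g : ℝ → ℝ} (h : IsPrim f g) :
    IsPrim (fun x => Real.exp (f x)) (fun x => g x * Real.exp (f x)) := by
  have hint : IntervalIntegrable (fun x => g x * Real.exp (f x)) volume 0 1 :=
    h.1.mul_cont h.continuousOn.rexp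
  obtain ⟨F, h1, h2, h3⟩ := h.exists_extension
  obtain ⟨C, hC⟩ := h2.exists_bound
  obtain ⟨K, hK⟩ := (Real.contDiff_exp (n := 1)).contDiffOn.exists_lipschitzOnWith
    (s := Icc (-C) C) (by decide) (convex_Icc _ _) isCompact_Icc
  have key : IsPrim (fun x => Real.exp (F x)) (fun x => g x * Real.exp (f x)) := by
    refine isPrim_of_absCont hint ?_ ?_
    · refine absCont_of_dist_le (K := K) h2 fun x hx y hy => ?_
      exact hK.dist_le_mul _ (abs_le.1 (hC x hx)) _ (abs_le.1 (hC y hy))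
    · filter_upwards [h3] with x hx hm
      rw [h1 x (by simpa using hm), mul_comm]
      exact (hx hm).exp
  refine ⟨hint, fun x hx => ?_⟩
  simp only [h1 x hx, h1 0 (by simp)]
  exact key.2 x hx

/-- Gronwall's inequality with an integrable coefficient. -/
lemma gronwall_integrable {k F : ℝ → ℝ} {A : ℝ} (hA : 0 ≤ A) (hk : IntervalIntegrable k volume 0 1)
    (hk0 : ∀ x, 0 ≤ k x) (hF : ContinuousOn F (Icc 0 1))
    (hle : ∀ x ∈ Icc (0:ℝ) 1, F x ≤ A + ∫ t in (0:ℝ)..x, k t * F t) :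
    ∀ x ∈ Icc (0:ℝ) 1, F x ≤ A * Real.exp (∫ t in (0:ℝ)..1, k t) := by
  intro x hx
  have h0 : (0:ℝ) ∈ Icc (0:ℝ) 1 := by simp
  set W : ℝ → ℝ := fun x => A + ∫ t in (0:ℝ)..x, k t * F t with hW
  set L : ℝ → ℝ := fun x => ∫ t in (0:ℝ)..x, -k t with hL
  have hWp : IsPrim W (fun t => k t * F t) := ⟨hk.mul_cont hF, fun x _ => by simp [hW]⟩
  have hLp : IsPrim L (fun t => -k t) := ⟨hk.neg, fun x _ => by simp [hL]⟩
  have hP := hWp.mul hLp.exp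
  have hPx := hP.2 x hx
  have hint : ∫ t in (0:ℝ)..x, (k t * F t * Real.exp (L t) + -k t * Real.exp (L t) * W t) ≤ 0 := by
    have h1 : IntervalIntegrable
        (fun t => k t * F t * Real.exp (L t) + -k t * Real.exp (L t) * W t) volume 0 x :=
      intervalIntegrable_sub hP.1 h0 hx
    have := intervalIntegral.integral_mono_on hx.1 h1
      (intervalIntegrable_const (c := (0:ℝ))) (fun t ht => by
        have h2 : F t ≤ W t := hle t ⟨ht.1, ht.2.trans hx.2⟩
        have h3 := mul_nonneg (hk0 t) (Real.exp_pos (L t)).le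
        nlinarith)
    simpa using this
  have hW0 : W 0 = A := by simp [hW]
  have hL0 : L 0 = 0 := by simp [hL]
  simp only [hW0, hL0, Real.exp_zero, mul_one] at hPx
  have hWA : W x * Real.exp (L x) ≤ A := by linarith
  have hLx : L x = -∫ t in (0:ℝ)..x, k t := by simp [hL]
  have hmono : (∫ t in (0:ℝ)..x, k t) ≤ ∫ t in (0:ℝ)..1, k t :=
    intervalIntegral.integral_mono_interval le_rfl hx.1 hx.2 (Eventually.of_forall hk0) hk
  rw [hLx, Real.exp_neg, ← div_eq_mul_inv, div_le_iff₀ (Real.exp_pos _)] at hWA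
  exact ((hle x hx).trans hWA).trans
    (mul_le_mul_of_nonneg_left (Real.exp_le_exp.2 hmono) hA)

/-! ### A perturbation estimate for a pair of coupled equations -/

lemma norm_integral_le_of_bound {p w : ℝ → ℂ} {C N : ℝ} (hp : IntervalIntegrable p volume 0 1)
    (hN : ∫ t in (0:ℝ)..1, ‖p t‖ ≤ N) (hC : 0 ≤ C)
    (hw : ∀ x ∈ Icc (0:ℝ) 1, ‖w x‖ ≤ C) {x : ℝ} (hx : x ∈ Icc (0:ℝ) 1) :
    ‖∫ t in (0:ℝ)..x, p t * w t‖ ≤ N * C := by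
  have h0 : (0:ℝ) ∈ Icc (0:ℝ) 1 := by simp
  calc ‖∫ t in (0:ℝ)..x, p t * w t‖ ≤ ∫ t in (0:ℝ)..x, ‖p t‖ * C := by
        refine intervalIntegral.norm_integral_le_of_norm_le hx.1 (Eventually.of_forall ?_)
          ((intervalIntegrable_sub hp.norm h0 hx).mul_const C)
        intro t ht
        rw [norm_mul]
        exact mul_le_mul_of_nonneg_left (hw t ⟨ht.1.le, ht.2.trans hx.2⟩) (norm_nonneg _)
    _ = (∫ t in (0:ℝ)..x, ‖p t‖) * C := intervalIntegral.integral_mul_const _ _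
    _ ≤ N * C := by
        refine mul_le_mul_of_nonneg_right (le_trans ?_ hN) hC
        exact intervalIntegral.integral_mono_interval le_rfl hx.1 hx.2
          (Eventually.of_forall fun t => norm_nonneg _) hp.norm

/-- If `u' = p v`, `v' = q u`, `u(0) = 1`, `v(0) = 0`, then `u - 1` and `v` are controlled by the
supremum `δ` of the primitive of `q` alone: `u` and `v` are bounded by Gronwall, and
`v = ∫ q u` is integrated by parts so that only `∫ q` and `u' = p v` occur. -/
lemma coupled_bound {u v p q : ℝ → ℂ} {N δ : ℝ}
    (hp : IntervalIntegrable p volume 0 1) (hq : IntervalIntegrable q volume 0 1)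
    (hpN : ∫ t in (0:ℝ)..1, ‖p t‖ ≤ N) (hqN : ∫ t in (0:ℝ)..1, ‖q t‖ ≤ N)
    (hu : IsPrim u (fun x => p x * v x)) (hv : IsPrim v (fun x => q x * u x))
    (hu0 : u 0 = 1) (hv0 : v 0 = 0)
    (hδ : ∀ x ∈ Icc (0:ℝ) 1, ‖∫ t in (0:ℝ)..x, q t‖ ≤ δ) :
    ∀ x ∈ Icc (0:ℝ) 1, ‖u x - 1‖ ≤ (1 + N) ^ 2 * Real.exp (2 * N) * δ ∧
      ‖v x‖ ≤ (1 + N) ^ 2 * Real.exp (2 * N) * δ := by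
  have h0 : (0:ℝ) ∈ Icc (0:ℝ) 1 := by simp
  have hN0 : 0 ≤ N := le_trans
    (intervalIntegral.integral_nonneg zero_le_one fun t _ => norm_nonneg (p t)) hpN
  have hδ0 : 0 ≤ δ := (norm_nonneg _).trans (hδ 0 h0)
  -- Gronwall's inequality for `‖u‖ + ‖v‖`
  have hkint : IntervalIntegrable (fun t => ‖p t‖ + ‖q t‖) volume 0 1 := hp.norm.add hq.norm
  have hFc : ContinuousOn (fun t => ‖u t‖ + ‖v t‖) (Icc 0 1) :=
    hu.continuousOn.norm.add hv.continuousOn.norm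
  have hgr : ∀ x ∈ Icc (0:ℝ) 1, ‖u x‖ + ‖v x‖ ≤ Real.exp (2 * N) := by
    intro x hx
    have := gronwall_integrable (A := 1) zero_le_one hkint
      (fun x => by positivity) hFc (fun x hx => by
        have h1 : ‖u x‖ ≤ 1 + ∫ t in (0:ℝ)..x, ‖p t * v t‖ := by
          rw [hu.2 x hx, hu0]
          refine (norm_add_le _ _).trans ?_
          rw [norm_one]
          gcongr
          exact intervalIntegral.norm_integral_le_integral_norm hx.1
        have h2 : ‖v x‖ ≤ ∫ t in (0:ℝ)..x, ‖q t * u t‖ := by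
          rw [hv.2 x hx, hv0, zero_add]
          exact intervalIntegral.norm_integral_le_integral_norm hx.1
        have hi1 := intervalIntegrable_sub hu.1.norm h0 hx
        have hi2 := intervalIntegrable_sub hv.1.norm h0 hx
        have h3 : (∫ t in (0:ℝ)..x, ‖p t * v t‖) + (∫ t in (0:ℝ)..x, ‖q t * u t‖) ≤
            ∫ t in (0:ℝ)..x, (‖p t‖ + ‖q t‖) * (‖u t‖ + ‖v t‖) := by
          rw [← intervalIntegral.integral_add hi1 hi2]
          refine intervalIntegral.integral_mono_on hx.1 (hi1.add hi2)
            (intervalIntegrable_sub (hkint.mul_cont hFc) h0 hx) fun t _ => ?_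
          rw [norm_mul, norm_mul]
          have e1 := mul_nonneg (norm_nonneg (p t)) (norm_nonneg (u t))
          have e2 := mul_nonneg (norm_nonneg (q t)) (norm_nonneg (v t))
          nlinarith
        linarith) x hx
    refine this.trans ?_
    rw [one_mul, intervalIntegral.integral_add hp.norm hq.norm]
    exact Real.exp_le_exp.2 (by linarith)
  have hub : ∀ x ∈ Icc (0:ℝ) 1, ‖u x‖ ≤ Real.exp (2 * N) := fun x hx => by
    have := hgr x hx; have := norm_nonneg (v x); linarith
  have hvb : ∀ x ∈ Icc (0:ℝ) 1, ‖v x‖ ≤ Real.exp (2 * N) := fun x hx => by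
    have := hgr x hx; have := norm_nonneg (u x); linarith
  set D := Real.exp (2 * N) with hD
  have hD0 : 0 < D := Real.exp_pos _
  set G : ℝ → ℂ := fun x => ∫ t in (0:ℝ)..x, q t with hG
  have hGp : IsPrim G q := ⟨hq, fun x _ => by simp [hG]⟩
  have hvx : ∀ x ∈ Icc (0:ℝ) 1, ‖v x‖ ≤ (1 + N) * D * δ := by
    intro x hx
    have hm := (hGp.mul hu).2 x hx
    have hG0 : G 0 = 0 := by simp [hG]
    rw [intervalIntegral.integral_add
      (intervalIntegrable_sub (hGp.1.mul_cont hu.continuousOn) h0 hx)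
      (intervalIntegrable_sub (hu.1.mul_cont hGp.continuousOn) h0 hx)] at hm
    simp only [hG0, zero_mul, zero_add] at hm
    have hv1 := hv.2 x hx
    rw [hv0, zero_add] at hv1
    have heq : v x = G x * u x - ∫ t in (0:ℝ)..x, p t * (v t * G t) := by
      rw [hm, hv1]
      simp only [mul_assoc]
      ring
    have hint : ‖∫ t in (0:ℝ)..x, p t * (v t * G t)‖ ≤ N * (D * δ) :=
      norm_integral_le_of_bound hp hpN (by positivity) (fun t ht => by
        rw [norm_mul]
        exact mul_le_mul (hvb t ht) (hδ t ht) (norm_nonneg _) hD0.le) hx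
    have h1 : ‖G x * u x‖ ≤ δ * D := by
      rw [norm_mul]
      exact mul_le_mul (hδ x hx) (hub x hx) (norm_nonneg _) hδ0
    rw [heq]
    refine (norm_sub_le _ _).trans ?_
    nlinarith
  intro x hx
  have hDδ : 0 ≤ D * δ := by positivity
  refine ⟨?_, (hvx x hx).trans ?_⟩
  · rw [hu.2 x hx, hu0, add_sub_cancel_left]
    refine (norm_integral_le_of_bound hp hpN (by positivity) hvx hx).trans ?_
    nlinarith [mul_nonneg hN0 hDδ]
  · nlinarith [mul_nonneg hN0 hDδ, mul_nonneg (mul_nonneg hN0 hN0) hDδ]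

/-! ### The Riemann–Lebesgue lemma, uniform in a strip and in the upper limit -/

lemma norm_exp_le (a h : ℝ) {l : ℂ} (hl : |l.im| ≤ h) {t : ℝ} (ht : t ∈ Icc (0:ℝ) 1) :
    ‖Complex.exp (I * a * l * t)‖ ≤ Real.exp (|a| * h) := by
  rw [Complex.norm_exp]
  refine Real.exp_le_exp.2 ?_
  have : (I * a * l * t).re = -(a * l.im) * t := by simp
  rw [this]
  calc -(a * l.im) * t ≤ |-(a * l.im) * t| := le_abs_self _
    _ = |a| * |l.im| * |t| := by rw [abs_mul, abs_neg, abs_mul]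
    _ ≤ |a| * h * 1 := by
      have : |t| ≤ 1 := by rw [abs_of_nonneg ht.1]; exact ht.2
      have := (abs_nonneg l.im).trans hl
      gcongr
    _ = |a| * h := mul_one _

lemma isPrim_exp (s : ℂ) :
    IsPrim (fun x : ℝ => Complex.exp (s * x)) (fun x : ℝ => s * Complex.exp (s * x)) := by
  refine isPrim_of_hasDerivAt (fun x => ?_) (by fun_prop)
  have h1 : HasDerivAt (fun x : ℝ => s * (x : ℂ)) s x := by
    simpa using (Complex.ofRealCLM.hasDerivAt (x := x)).const_mul s
  simpa [mul_comm] using h1.cexp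

lemma intervalIntegrable_exp_mul {R : ℝ → ℂ} (hR : IntervalIntegrable R volume 0 1) (s : ℂ) :
    IntervalIntegrable (fun t : ℝ => Complex.exp (s * t) * R t) volume 0 1 :=
  hR.continuousOn_mul (Continuous.continuousOn (by fun_prop))

/-- `R` is approximated in `L¹` by a smooth function, for which one integration by parts gives
a bound of order `1 / ‖l‖`. -/
lemma riemann_lebesgue_strip {a : ℝ} (ha : a ≠ 0) {R : ℝ → ℂ}
    (hR : IntervalIntegrable R volume 0 1) (h : ℝ) {ε : ℝ} (hε : 0 < ε) :
    ∃ M : ℝ, 0 < M ∧ ∀ l : ℂ, M < ‖l‖ → |l.im| ≤ h → ∀ x ∈ Icc (0:ℝ) 1,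
      ‖∫ t in (0:ℝ)..x, Complex.exp (I * a * l * t) * R t‖ ≤ ε := by
  set D := Real.exp (|a| * h) with hD
  have hD0 : 0 < D := Real.exp_pos _
  have h0 : (0:ℝ) ∈ Icc (0:ℝ) 1 := by simp
  have hRm : MemLp R 1 (volume.restrict (Ioc 0 1)) :=
    memLp_one_iff_integrable.2 ((intervalIntegrable_iff_integrableOn_Ioc_of_le zero_le_one).1 hR)
  obtain ⟨g, -, hgs, hg⟩ := hRm.exist_eLpNorm_sub_le (by simp) le_rfl
    (show 0 < ε / (2 * D) by positivity)
  have hgc : Continuous g := hgs.continuous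
  have hg' : Continuous (deriv g) := hgs.continuous_deriv (by simp)
  have hgp : IsPrim g (deriv g) := isPrim_of_hasDerivAt
    (fun x => (hgs.differentiable (by simp) x).hasDerivAt) hg'
  have hRg : IntervalIntegrable (fun t => R t - g t) volume 0 1 :=
    hR.sub (hgc.intervalIntegrable _ _)
  have hnorm : ∫ t in (0:ℝ)..1, ‖R t - g t‖ ≤ ε / (2 * D) := by
    rw [intervalIntegral.integral_of_le zero_le_one, integral_norm_eq_lintegral_enorm
      ((intervalIntegrable_iff_integrableOn_Ioc_of_le zero_le_one).1 hRg).aestronglyMeasurable]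
    rw [eLpNorm_one_eq_lintegral_enorm] at hg
    exact ENNReal.toReal_le_of_le_ofReal (by positivity) hg
  obtain ⟨A, hA⟩ := isCompact_Icc.exists_bound_of_continuousOn (s := Icc (0:ℝ) 1) hgc.continuousOn
  obtain ⟨A', hA'⟩ :=
    isCompact_Icc.exists_bound_of_continuousOn (s := Icc (0:ℝ) 1) hg'.continuousOn
  have hA0 : 0 ≤ A := (norm_nonneg _).trans (hA 0 h0)
  have hA'0 : 0 ≤ A' := (norm_nonneg _).trans (hA' 0 h0)
  set T := D * (2 * A + A') with hT
  have hT0 : 0 ≤ T := by positivity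
  refine ⟨2 * (T + 1) / (|a| * ε), by positivity, fun l hl him x hx => ?_⟩
  set s : ℂ := I * a * l with hs
  have hexp : ∀ t ∈ Icc (0:ℝ) 1, ‖Complex.exp (s * t)‖ ≤ D := fun t ht => norm_exp_le a h him ht
  -- the smooth part
  have hsm : ‖s * ∫ t in (0:ℝ)..x, Complex.exp (s * t) * g t‖ ≤ T := by
    have hm := ((isPrim_exp s).mul hgp).2 x hx
    rw [intervalIntegral.integral_add
      (intervalIntegrable_sub ((isPrim_exp s).1.mul_cont hgc.continuousOn) h0 hx)
      (intervalIntegrable_sub (hgp.1.mul_cont (isPrim_exp s).continuousOn) h0 hx)] at hm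
    simp only [mul_assoc s, intervalIntegral.integral_const_mul] at hm
    have heq : s * (∫ t in (0:ℝ)..x, Complex.exp (s * t) * g t) =
        Complex.exp (s * x) * g x - Complex.exp (s * (0:ℝ)) * g 0 -
        ∫ t in (0:ℝ)..x, deriv g t * Complex.exp (s * t) := by
      rw [hm]; ring
    have b1 : ∀ t ∈ Icc (0:ℝ) 1, ‖Complex.exp (s * t) * g t‖ ≤ D * A := fun t ht => by
      rw [norm_mul]
      exact mul_le_mul (hexp t ht) (hA t ht) (norm_nonneg _) hD0.le
    have b2 : ‖∫ t in (0:ℝ)..x, deriv g t * Complex.exp (s * t)‖ ≤ A' * D := by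
      refine norm_integral_le_of_bound hgp.1 ?_ hD0.le hexp hx
      have := intervalIntegral.integral_mono_on zero_le_one hgp.1.norm
        (intervalIntegrable_const (c := A')) hA'
      simpa using this
    rw [heq]
    have := norm_sub_le (Complex.exp (s * x) * g x - Complex.exp (s * (0:ℝ)) * g 0)
      (∫ t in (0:ℝ)..x, deriv g t * Complex.exp (s * t))
    have := norm_sub_le (Complex.exp (s * x) * g x) (Complex.exp (s * (0:ℝ)) * g 0)
    have := b1 x hx
    have := b1 0 h0
    rw [hT]
    linarith
  have hsnorm : ‖s‖ = |a| * ‖l‖ := by simp [hs]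
  have hsm' : ‖∫ t in (0:ℝ)..x, Complex.exp (s * t) * g t‖ ≤ ε / 2 := by
    rw [norm_mul, hsnorm] at hsm
    have hapos : 0 < |a| := abs_pos.2 ha
    rw [div_lt_iff₀ (by positivity)] at hl
    by_contra hcon
    push Not at hcon
    have hlpos : 0 < ‖l‖ := by
      by_contra hc
      have : ‖l‖ = 0 := le_antisymm (not_lt.1 hc) (norm_nonneg _)
      rw [this] at hl; linarith
    have := mul_lt_mul_of_pos_left hcon (mul_pos hapos hlpos)
    nlinarith
  -- the small part
  have hrest : ‖∫ t in (0:ℝ)..x, (R t - g t) * Complex.exp (s * t)‖ ≤ ε / 2 := by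
    refine (norm_integral_le_of_bound hRg hnorm hD0.le hexp hx).trans (le_of_eq ?_)
    field_simp
  have hsplit : ∫ t in (0:ℝ)..x, Complex.exp (s * t) * R t =
      (∫ t in (0:ℝ)..x, Complex.exp (s * t) * g t) +
      ∫ t in (0:ℝ)..x, (R t - g t) * Complex.exp (s * t) := by
    rw [← intervalIntegral.integral_add
      (intervalIntegrable_sub (intervalIntegrable_exp_mul (hgc.intervalIntegrable _ _) s) h0 hx)
      (intervalIntegrable_sub (hRg.mul_cont (isPrim_exp s).continuousOn) h0 hx)]
    congr 1
    ext t
    ring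
  rw [hsplit]
  exact (norm_add_le _ _).trans (by linarith)

/-! ### Asymptotics of solutions in a strip -/

/-- A solution of `y' = i b (l y - P z)`, `z' = i c (l z - R y)` with `y(0) = 1`, `z(0) = 0`
converges uniformly on `[0,1]` to the solution of the unperturbed system. The substitution
`u = e^{-iblx} y`, `v = e^{-iclx} z` turns the system into `u' = p v`, `v' = q u` with `p`, `q`
bounded in `L¹` over the strip and `∫ q` uniformly small by the Riemann–Lebesgue lemma. -/
lemma scalar_pair_asymp {b c : ℝ} (hbc : b ≠ c) {P R : ℝ → ℂ}
    (hP : IntervalIntegrable P volume 0 1) (hR : IntervalIntegrable R volume 0 1) (h : ℝ)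
    {ε : ℝ} (hε : 0 < ε) :
    ∃ M : ℝ, 0 < M ∧ ∀ l : ℂ, M < ‖l‖ → |l.im| ≤ h → ∀ y z gy gz : ℝ → ℂ,
      IsPrim y gy → IsPrim z gz → y 0 = 1 → z 0 = 0 →
      (∀ᵐ x, x ∈ Icc (0:ℝ) 1 → gy x = I * b * (l * y x - P x * z x) ∧
        gz x = I * c * (l * z x - R x * y x)) →
      ∀ x ∈ Icc (0:ℝ) 1, ‖y x - Complex.exp (I * b * l * x)‖ ≤ ε ∧ ‖z x‖ ≤ ε := by
  set K := Real.exp (|c - b| * h) with hK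
  have hK0 : 0 < K := Real.exp_pos _
  set N := max (|b| * (K * ∫ t in (0:ℝ)..1, ‖P t‖)) (|c| * (K * ∫ t in (0:ℝ)..1, ‖R t‖)) with hN
  have hN0 : 0 ≤ N := le_max_of_le_left (by
    have := intervalIntegral.integral_nonneg zero_le_one (μ := volume)
      fun (t : ℝ) _ => norm_nonneg (P t)
    positivity)
  set D := max (Real.exp (|b| * h)) (Real.exp (|c| * h)) with hD
  have hD0 : 0 < D := lt_max_of_lt_left (Real.exp_pos _)
  set C := (1 + N) ^ 2 * Real.exp (2 * N) with hC
  have hC0 : 0 < C := by positivity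
  obtain ⟨M, hM, hRL⟩ := riemann_lebesgue_strip (sub_ne_zero.2 hbc) hR h
    (show 0 < ε / (D * C * (|c| + 1)) by positivity)
  refine ⟨M, hM, fun l hl him y z gy gz hy hz hy0 hz0 heq => ?_⟩
  set p : ℝ → ℂ := fun t => -I * b * (Complex.exp (I * (c - b : ℝ) * l * t) * P t) with hp
  set q : ℝ → ℂ := fun t => -I * c * (Complex.exp (I * (b - c : ℝ) * l * t) * R t) with hq
  set u : ℝ → ℂ := fun t => Complex.exp (-(I * b * l) * t) * y t with hu
  set v : ℝ → ℂ := fun t => Complex.exp (-(I * c * l) * t) * z t with hv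
  have hpi : IntervalIntegrable p volume 0 1 := (intervalIntegrable_exp_mul hP _).const_mul _
  have hqi : IntervalIntegrable q volume 0 1 := (intervalIntegrable_exp_mul hR _).const_mul _
  have hup : IsPrim u (fun x => p x * v x) := by
    refine ((isPrim_exp (-(I * b * l))).mul hy).congr_ae ?_
    filter_upwards [heq] with x hx hxm
    have e1 : Complex.exp (I * (c - b : ℝ) * l * x) * Complex.exp (-(I * c * l) * x) =
        Complex.exp (-(I * b * l) * x) := by
      rw [← Complex.exp_add]; congr 1; push_cast; ring
    have e2 : p x * v x = -I * b * P x * z x *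
        (Complex.exp (I * (c - b : ℝ) * l * x) * Complex.exp (-(I * c * l) * x)) := by
      simp only [hp, hv]; ring
    rw [(hx hxm).1, e2, e1]
    ring
  have hvp : IsPrim v (fun x => q x * u x) := by
    refine ((isPrim_exp (-(I * c * l))).mul hz).congr_ae ?_
    filter_upwards [heq] with x hx hxm
    have e1 : Complex.exp (I * (b - c : ℝ) * l * x) * Complex.exp (-(I * b * l) * x) =
        Complex.exp (-(I * c * l) * x) := by
      rw [← Complex.exp_add]; congr 1; push_cast; ring
    have e2 : q x * u x = -I * c * R x * y x *
        (Complex.exp (I * (b - c : ℝ) * l * x) * Complex.exp (-(I * b * l) * x)) := by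
      simp only [hq, hu]; ring
    rw [(hx hxm).2, e2, e1]
    ring
  have hpN : ∫ t in (0:ℝ)..1, ‖p t‖ ≤ N := by
    refine le_trans ?_ (le_max_left _ _)
    rw [← intervalIntegral.integral_const_mul, ← intervalIntegral.integral_const_mul]
    refine intervalIntegral.integral_mono_on zero_le_one hpi.norm
      ((hP.norm.const_mul _).const_mul _) fun t ht => ?_
    have := norm_exp_le (c - b) h him ht
    simp only [hp, norm_mul, norm_neg, norm_I, one_mul, Complex.norm_real, Real.norm_eq_abs]
    gcongr
  have hqN : ∫ t in (0:ℝ)..1, ‖q t‖ ≤ N := by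
    refine le_trans ?_ (le_max_right _ _)
    rw [← intervalIntegral.integral_const_mul, ← intervalIntegral.integral_const_mul]
    refine intervalIntegral.integral_mono_on zero_le_one hqi.norm
      ((hR.norm.const_mul _).const_mul _) fun t ht => ?_
    have := norm_exp_le (b - c) h him ht
    rw [abs_sub_comm] at this
    simp only [hq, norm_mul, norm_neg, norm_I, one_mul, Complex.norm_real, Real.norm_eq_abs]
    gcongr
  have hδ : ∀ x ∈ Icc (0:ℝ) 1, ‖∫ t in (0:ℝ)..x, q t‖ ≤ ε / (D * C) := fun x hx => by
    have h1 := hRL l hl him x hx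
    simp only [hq, intervalIntegral.integral_const_mul, norm_mul, norm_neg, norm_I, one_mul,
      Complex.norm_real, Real.norm_eq_abs]
    calc _ ≤ |c| * (ε / (D * C * (|c| + 1))) := by gcongr
      _ = ε / (D * C) * (|c| / (|c| + 1)) := by field_simp
      _ ≤ ε / (D * C) * 1 := by
        gcongr
        rw [div_le_one (by positivity)]; linarith
      _ = _ := mul_one _
  intro x hx
  obtain ⟨h1, h2⟩ := coupled_bound hpi hqi hpN hqN hup hvp (by simp [hu, hy0]) (by simp [hv, hz0])
    hδ x hx
  have hCD : C * (ε / (D * C)) = ε / D := by field_simp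
  rw [← hC, hCD] at h1 h2
  have hb := (norm_exp_le b h him hx).trans (le_max_left _ (Real.exp (|c| * h)))
  have hc := (norm_exp_le c h him hx).trans (le_max_right (Real.exp (|b| * h)) _)
  have hy' : y x - Complex.exp (I * b * l * x) = Complex.exp (I * b * l * x) * (u x - 1) := by
    have : Complex.exp (I * b * l * x) * Complex.exp (-(I * b * l) * x) = 1 := by
      rw [← Complex.exp_add]; simp
    simp only [hu]
    linear_combination (-y x) * this
  have hz' : z x = Complex.exp (I * c * l * x) * v x := by
    have : Complex.exp (I * c * l * x) * Complex.exp (-(I * c * l) * x) = 1 := by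
      rw [← Complex.exp_add]; simp
    simp only [hv]
    linear_combination (-z x) * this
  have hDε : D * (ε / D) = ε := by field_simp
  refine ⟨?_, ?_⟩
  · rw [hy', norm_mul, ← hDε]
    exact mul_le_mul hb h1 (norm_nonneg _) hD0.le
  · rw [hz', norm_mul, ← hDε]
    exact mul_le_mul hc h2 (norm_nonneg _) hD0.le

lemma IsSol.exists_isPrim {b₁ b₂ : ℝ} (hb₁ : b₁ ≠ 0) (hb₂ : b₂ ≠ 0) {Q₁₂ Q₂₁ : ℝ → ℂ} {l : ℂ}
    {y : ℝ → Fin 2 → ℂ} (hy : IsSol b₁ b₂ Q₁₂ Q₂₁ l y) :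
    ∃ g : ℝ → Fin 2 → ℂ, (∀ i, IsPrim (fun x => y x i) (fun x => g x i)) ∧
      ∀ᵐ x, x ∈ Icc (0:ℝ) 1 → g x 0 = I * b₁ * (l * y x 0 - Q₁₂ x * y x 1) ∧
        g x 1 = I * b₂ * (l * y x 1 - Q₂₁ x * y x 0) := by
  obtain ⟨g, hgi, hg, hae⟩ := hy
  refine ⟨g, fun i => ⟨?_, fun x hx => hg x hx i⟩, ?_⟩
  · rw [intervalIntegrable_iff_integrableOn_Icc_of_le zero_le_one]
    exact hgi i
  · filter_upwards [(ae_restrict_iff' measurableSet_Icc).1 hae] with x hx hxm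
    obtain ⟨h1, h2⟩ := hx hxm
    have hb₁' : (b₁ : ℂ) ≠ 0 := by exact_mod_cast hb₁
    have hb₂' : (b₂ : ℂ) ≠ 0 := by exact_mod_cast hb₂
    constructor
    · rw [← h1]; field_simp; ring_nf; simp
    · rw [← h2]; field_simp; ring_nf; simp

/-- The fundamental matrix of the unperturbed system `-i B⁻¹ y' = l y`. -/
def freeSol (b₁ b₂ : ℝ) (l : ℂ) (x : ℝ) (j k : Fin 2) : ℂ :=
  if j = k then Complex.exp (I * (![b₁, b₂] j : ℝ) * l * x) else 0

lemma fundSol_asymp {b₁ b₂ : ℝ} (hb₁ : b₁ < 0) (hb₂ : 0 < b₂) {Q₁₂ Q₂₁ : ℝ → ℂ}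
    (hQ₁₂ : IntegrableOn Q₁₂ (Icc (0:ℝ) 1)) (hQ₂₁ : IntegrableOn Q₂₁ (Icc (0:ℝ) 1))
    {Φ : ℂ → ℝ → Fin 2 → Fin 2 → ℂ} (hΦ : IsFundSol b₁ b₂ Q₁₂ Q₂₁ Φ) (h : ℝ)
    {ε : ℝ} (hε : 0 < ε) :
    ∃ M : ℝ, 0 < M ∧ ∀ l : ℂ, M < ‖l‖ → |l.im| ≤ h → ∀ x ∈ Icc (0:ℝ) 1, ∀ j k : Fin 2,
      ‖Φ l x j k - freeSol b₁ b₂ l x j k‖ ≤ ε := by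
  have hi1 : IntervalIntegrable Q₁₂ volume 0 1 :=
    (intervalIntegrable_iff_integrableOn_Icc_of_le zero_le_one).2 hQ₁₂
  have hi2 : IntervalIntegrable Q₂₁ volume 0 1 :=
    (intervalIntegrable_iff_integrableOn_Icc_of_le zero_le_one).2 hQ₂₁
  have hne : b₁ ≠ b₂ := (hb₁.trans hb₂).ne
  obtain ⟨M₁, hM₁, H₁⟩ := scalar_pair_asymp hne hi1 hi2 h hε
  obtain ⟨M₂, hM₂, H₂⟩ := scalar_pair_asymp hne.symm hi2 hi1 h hε
  refine ⟨max M₁ M₂, lt_max_of_lt_left hM₁, fun l hl him x hx j k => ?_⟩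
  obtain ⟨hinit, hsol⟩ := hΦ l
  obtain ⟨g, hg, hae⟩ := (hsol 0).exists_isPrim hb₁.ne hb₂.ne'
  obtain ⟨g', hg', hae'⟩ := (hsol 1).exists_isPrim hb₁.ne hb₂.ne'
  have h1 := H₁ l ((le_max_left _ _).trans_lt hl) him _ _ _ _ (hg 0) (hg 1)
    (by simp [hinit]) (by simp [hinit]) hae x hx
  have h2 := H₂ l ((le_max_right _ _).trans_lt hl) him _ _ _ _ (hg' 1) (hg' 0)
    (by simp [hinit]) (by simp [hinit]) (hae'.mono fun x hx hm => (hx hm).symm) x hx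
  fin_cases j <;> fin_cases k <;> simp [freeSol]
  exacts [h1.1, h2.2, h1.2, h2.1]

lemma IsFundSol.continuousOn {b₁ b₂ : ℝ} (hb₁ : b₁ < 0) (hb₂ : 0 < b₂) {Q₁₂ Q₂₁ : ℝ → ℂ}
    {Φ : ℂ → ℝ → Fin 2 → Fin 2 → ℂ} (hΦ : IsFundSol b₁ b₂ Q₁₂ Q₂₁ Φ) (l : ℂ) (j k : Fin 2) :
    ContinuousOn (fun x => Φ l x j k) (Icc 0 1) := by
  obtain ⟨g, hg, -⟩ := ((hΦ l).2 k).exists_isPrim hb₁.ne hb₂.ne'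
  exact (hg j).continuousOn

/-! ### Inner products -/

lemma norm_freeSol_le {b₁ b₂ h β : ℝ} (h1 : |b₁| ≤ β) (h2 : |b₂| ≤ β) {l : ℂ} (hl : |l.im| ≤ h)
    {x : ℝ} (hx : x ∈ Icc (0:ℝ) 1) (j k : Fin 2) :
    ‖freeSol b₁ b₂ l x j k‖ ≤ Real.exp (β * h) := by
  have hh : 0 ≤ h := (abs_nonneg _).trans hl
  unfold freeSol
  split_ifs
  · refine (norm_exp_le _ h hl hx).trans (Real.exp_le_exp.2 ?_)
    refine mul_le_mul_of_nonneg_right ?_ hh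
    fin_cases j
    exacts [h1, h2]
  · simpa using (Real.exp_pos _).le

lemma le_norm_freeSol {b₁ b₂ h β : ℝ} (h1 : |b₁| ≤ β) (h2 : |b₂| ≤ β) {l : ℂ} (hl : |l.im| ≤ h)
    {x : ℝ} (hx : x ∈ Icc (0:ℝ) 1) (j : Fin 2) :
    (Real.exp (β * h))⁻¹ ≤ ‖freeSol b₁ b₂ l x j j‖ := by
  have hl' : |(-l).im| ≤ h := by simpa using hl
  have hn := norm_freeSol_le h1 h2 hl' hx j j
  have : freeSol b₁ b₂ (-l) x j j = (freeSol b₁ b₂ l x j j)⁻¹ := by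
    simp [freeSol, ← Complex.exp_neg]
  rw [this, norm_inv] at hn
  have hpos : 0 < ‖freeSol b₁ b₂ l x j j‖ := by simp [freeSol]
  exact inv_le_of_inv_le₀ hpos hn

lemma norm_mul_conj_sub_le {a a' b b' : ℂ} {D η : ℝ} (hη : η ≤ 1) (ha : ‖a - a'‖ ≤ η)
    (hb : ‖b - b'‖ ≤ η) (ha' : ‖a'‖ ≤ D) (hb' : ‖b'‖ ≤ D) :
    ‖a * conj b - a' * conj b'‖ ≤ η * (2 * D + 1) := by
  have hη0 : 0 ≤ η := (norm_nonneg _).trans ha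
  have hbn : ‖b‖ ≤ D + 1 := by
    have := norm_add_le (b - b') b'
    rw [sub_add_cancel] at this
    linarith
  have : a * conj b - a' * conj b' = (a - a') * conj b + a' * conj (b - b') := by
    rw [map_sub]; ring
  rw [this]
  refine (norm_add_le _ _).trans ?_
  rw [norm_mul, norm_mul, RCLike.norm_conj, RCLike.norm_conj]
  have e1 := mul_le_mul ha hbn (norm_nonneg _) hη0
  have e2 := mul_le_mul ha' hb (norm_nonneg _) ((norm_nonneg _).trans ha')
  linarith

/-- If the columns `(a₀, a₁)` and `(b₀, b₁)` are `η`-close to functions whose pointwise product is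
the constant `d`, then their inner product is close to `d`. -/
lemma inner_close {a₀ a₁ b₀ b₁ a₀' a₁' b₀' b₁' : ℝ → ℂ} {d : ℂ} {D η : ℝ} (hη : η ≤ 1)
    (ha₀c : ContinuousOn a₀ (Icc 0 1)) (ha₁c : ContinuousOn a₁ (Icc 0 1))
    (hb₀c : ContinuousOn b₀ (Icc 0 1)) (hb₁c : ContinuousOn b₁ (Icc 0 1))
    (ha₀ : ∀ x ∈ Icc (0:ℝ) 1, ‖a₀ x - a₀' x‖ ≤ η ∧ ‖a₀' x‖ ≤ D)
    (ha₁ : ∀ x ∈ Icc (0:ℝ) 1, ‖a₁ x - a₁' x‖ ≤ η ∧ ‖a₁' x‖ ≤ D)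
    (hb₀ : ∀ x ∈ Icc (0:ℝ) 1, ‖b₀ x - b₀' x‖ ≤ η ∧ ‖b₀' x‖ ≤ D)
    (hb₁ : ∀ x ∈ Icc (0:ℝ) 1, ‖b₁ x - b₁' x‖ ≤ η ∧ ‖b₁' x‖ ≤ D)
    (hd : ∀ x, a₀' x * conj (b₀' x) + a₁' x * conj (b₁' x) = d) :
    ‖(∫ x in Icc (0:ℝ) 1, (a₀ x * conj (b₀ x) + a₁ x * conj (b₁ x))) - d‖ ≤
      2 * (η * (2 * D + 1)) := by
  have hc : ContinuousOn (fun x => a₀ x * conj (b₀ x) + a₁ x * conj (b₁ x)) (Icc 0 1) :=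
    (ha₀c.mul (Complex.continuous_conj.comp_continuousOn hb₀c)).add
      (ha₁c.mul (Complex.continuous_conj.comp_continuousOn hb₁c))
  have hsub : (∫ x in Icc (0:ℝ) 1, (a₀ x * conj (b₀ x) + a₁ x * conj (b₁ x))) - d =
      ∫ x in Icc (0:ℝ) 1, ((a₀ x * conj (b₀ x) + a₁ x * conj (b₁ x)) - d) := by
    rw [integral_sub (hc.integrableOn_compact isCompact_Icc)
      (continuousOn_const.integrableOn_compact isCompact_Icc)]
    simp
  rw [hsub]
  refine (norm_setIntegral_le_of_norm_le_const (C := 2 * (η * (2 * D + 1))) (by simp)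
    fun x hx => ?_).trans (by simp)
  rw [← hd x]
  have e1 := norm_mul_conj_sub_le hη (ha₀ x hx).1 (hb₀ x hx).1 (ha₀ x hx).2 (hb₀ x hx).2
  have e2 := norm_mul_conj_sub_le hη (ha₁ x hx).1 (hb₁ x hx).1 (ha₁ x hx).2 (hb₁ x hx).2
  rw [add_sub_add_comm]
  exact (norm_add_le _ _).trans (by linarith)

lemma freeSol_mul_conj (b₁ b₂ : ℝ) (l : ℂ) (x : ℝ) (j : Fin 2) :
    freeSol b₁ b₂ l x j j * conj (freeSol b₁ b₂ (conj l) x j j) = 1 := by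
  simp only [freeSol, if_true, ← Complex.exp_conj, ← Complex.exp_add]
  simp

/-- Asymptotics of inner products of columns of the fundamental solutions
`Φ` and `Ψ` (adjoint system) in a strip: `⟨Φ_j(·,λ), Ψ_k(·,conj λ)⟩ = δ_{jk} + o(1)`,
`⟨Φ₁(·,λ), Φ₂(·,λ)⟩ = o(1)`, and `‖Φ_j(·,λ)‖²` is bounded above and below for large `λ`. -/
theorem riesz_dirac_stmt13 (b₁ b₂ : ℝ) (hb₁ : b₁ < 0) (hb₂ : 0 < b₂)
    (Q₁₂ Q₂₁ : ℝ → ℂ)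
    (hQ₁₂ : IntegrableOn Q₁₂ (Set.Icc (0:ℝ) 1))
    (hQ₂₁ : IntegrableOn Q₂₁ (Set.Icc (0:ℝ) 1))
    (Φ Ψ : ℂ → ℝ → Fin 2 → Fin 2 → ℂ)
    (hΦ : IsFundSol b₁ b₂ Q₁₂ Q₂₁ Φ)
    (hΨ : IsFundSol b₁ b₂ (fun x => conj (Q₂₁ x)) (fun x => conj (Q₁₂ x)) Ψ)
    (h : ℝ) (hh : 0 < h) :
    (∀ ε : ℝ, 0 < ε → ∃ M : ℝ, 0 < M ∧ ∀ l : ℂ, M < ‖l‖ → |l.im| ≤ h →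
      (∀ j k : Fin 2,
        ‖(∫ x in Set.Icc (0:ℝ) 1,
            (Φ l x 0 j * conj (Ψ (conj l) x 0 k) + Φ l x 1 j * conj (Ψ (conj l) x 1 k)))
          - (if j = k then 1 else 0)‖ < ε) ∧
      ‖∫ x in Set.Icc (0:ℝ) 1,
          (Φ l x 0 0 * conj (Φ l x 0 1) + Φ l x 1 0 * conj (Φ l x 1 1))‖ < ε) ∧
    (∃ M : ℝ, 0 < M ∧ ∃ C₁ : ℝ, 0 < C₁ ∧ ∃ C₂ : ℝ, 0 < C₂ ∧
      ∀ l : ℂ, M < ‖l‖ → |l.im| ≤ h → ∀ j : Fin 2,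
        C₁ < (∫ x in Set.Icc (0:ℝ) 1, (‖Φ l x 0 j‖ ^ 2 + ‖Φ l x 1 j‖ ^ 2)) ∧
        (∫ x in Set.Icc (0:ℝ) 1, (‖Φ l x 0 j‖ ^ 2 + ‖Φ l x 1 j‖ ^ 2)) < C₂) := by
  obtain ⟨β, hβ₁, hβ₂⟩ : ∃ β : ℝ, |b₁| ≤ β ∧ |b₂| ≤ β :=
    ⟨max |b₁| |b₂|, le_max_left _ _, le_max_right _ _⟩
  set D := Real.exp (β * h) with hD
  have hD0 : 0 < D := Real.exp_pos _
  have hΦc := fun l j k => hΦ.continuousOn hb₁ hb₂ l j k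
  have hΨc := fun l j k => hΨ.continuousOn hb₁ hb₂ l j k
  constructor
  · intro ε hε
    set η := min 1 (ε / (4 * (2 * D + 1))) with hη
    have hη0 : 0 < η := lt_min one_pos (by positivity)
    have hη1 : η ≤ 1 := min_le_left _ _
    have hηε : 2 * (η * (2 * D + 1)) < ε := by
      have : η ≤ ε / (4 * (2 * D + 1)) := min_le_right _ _
      rw [le_div_iff₀ (by positivity)] at this
      nlinarith
    obtain ⟨M, hM, H⟩ := fundSol_asymp hb₁ hb₂ hQ₁₂ hQ₂₁ hΦ h hη0
    obtain ⟨M', hM', H'⟩ := fundSol_asymp hb₁ hb₂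
      (Complex.conjCLE.toContinuousLinearMap.integrable_comp hQ₂₁)
      (Complex.conjCLE.toContinuousLinearMap.integrable_comp hQ₁₂) hΨ h hη0
    refine ⟨max M M', lt_max_of_lt_left hM, fun l hl him => ?_⟩
    have hlM : M < ‖l‖ := (le_max_left _ _).trans_lt hl
    have hlM' : M' < ‖conj l‖ := by
      rw [RCLike.norm_conj]; exact (le_max_right _ _).trans_lt hl
    have him' : |(conj l).im| ≤ h := by simpa using him
    have A : ∀ j k, ∀ x ∈ Icc (0:ℝ) 1, ‖Φ l x j k - freeSol b₁ b₂ l x j k‖ ≤ η ∧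
        ‖freeSol b₁ b₂ l x j k‖ ≤ D := fun j k x hx =>
      ⟨H l hlM him x hx j k, norm_freeSol_le hβ₁ hβ₂ him hx j k⟩
    have B : ∀ j k, ∀ x ∈ Icc (0:ℝ) 1,
        ‖Ψ (conj l) x j k - freeSol b₁ b₂ (conj l) x j k‖ ≤ η ∧
        ‖freeSol b₁ b₂ (conj l) x j k‖ ≤ D := fun j k x hx =>
      ⟨H' _ hlM' him' x hx j k, norm_freeSol_le hβ₁ hβ₂ him' hx j k⟩
    refine ⟨fun j k => ?_, ?_⟩
    · refine (inner_close hη1 (hΦc l 0 j) (hΦc l 1 j) (hΨc _ 0 k) (hΨc _ 1 k)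
        (A 0 j) (A 1 j) (B 0 k) (B 1 k) fun x => ?_).trans_lt hηε
      have f0 := freeSol_mul_conj b₁ b₂ l x 0
      have f1 := freeSol_mul_conj b₁ b₂ l x 1
      have z01 : ∀ l, freeSol b₁ b₂ l x 0 1 = 0 := fun l => by simp [freeSol]
      have z10 : ∀ l, freeSol b₁ b₂ l x 1 0 = 0 := fun l => by simp [freeSol]
      fin_cases j <;> fin_cases k <;> simp [z01, z10]
      exacts [f0, f1]
    · have := inner_close (d := 0) hη1 (hΦc l 0 0) (hΦc l 1 0) (hΦc l 0 1) (hΦc l 1 1)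
        (A 0 0) (A 1 0) (A 0 1) (A 1 1) fun x => by simp [freeSol]
      rw [sub_zero] at this
      exact this.trans_lt hηε
  · obtain ⟨M, hM, H⟩ := fundSol_asymp hb₁ hb₂ hQ₁₂ hQ₂₁ hΦ h
      (show 0 < D⁻¹ / 2 by positivity)
    refine ⟨M, hM, (D⁻¹ / 2) ^ 2 / 2, by positivity, 2 * (D + D⁻¹ / 2) ^ 2 + 1, by positivity,
      fun l hl him j => ?_⟩
    have hc : ContinuousOn (fun x => ‖Φ l x 0 j‖ ^ 2 + ‖Φ l x 1 j‖ ^ 2) (Icc 0 1) :=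
      ((hΦc l 0 j).norm.pow 2).add ((hΦc l 1 j).norm.pow 2)
    have hint := hc.integrableOn_compact (μ := volume) isCompact_Icc
    have hci : ∀ c : ℝ, IntegrableOn (fun _ : ℝ => c) (Icc (0:ℝ) 1) := fun c =>
      continuousOn_const.integrableOn_compact isCompact_Icc
    constructor
    · have hlow : ∀ x ∈ Icc (0:ℝ) 1, (D⁻¹ / 2) ^ 2 ≤ ‖Φ l x 0 j‖ ^ 2 + ‖Φ l x 1 j‖ ^ 2 := by
        intro x hx
        have e1 := le_norm_freeSol hβ₁ hβ₂ him hx j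
        have e2 := H l hl him x hx j j
        have e3 := norm_sub_norm_le (freeSol b₁ b₂ l x j j) (Φ l x j j)
        rw [norm_sub_rev] at e3
        have e4 : D⁻¹ / 2 ≤ ‖Φ l x j j‖ := by linarith
        have e5 : (D⁻¹ / 2) ^ 2 ≤ ‖Φ l x j j‖ ^ 2 := by gcongr
        refine e5.trans ?_
        fin_cases j <;> simp
      have := setIntegral_mono_on (hci _) hint measurableSet_Icc hlow
      have hpos : 0 < (D⁻¹ / 2) ^ 2 := by positivity
      simp only [integral_const, MeasurableSet.univ, measureReal_restrict_apply, univ_inter,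
        Real.volume_real_Icc_of_le zero_le_one, sub_zero, one_smul] at this
      linarith
    · have hup : ∀ x ∈ Icc (0:ℝ) 1,
          ‖Φ l x 0 j‖ ^ 2 + ‖Φ l x 1 j‖ ^ 2 ≤ 2 * (D + D⁻¹ / 2) ^ 2 := by
        intro x hx
        have e : ∀ i, ‖Φ l x i j‖ ^ 2 ≤ (D + D⁻¹ / 2) ^ 2 := fun i => by
          have e1 := norm_freeSol_le hβ₁ hβ₂ him hx i j
          have e2 := H l hl him x hx i j
          have e3 := norm_sub_norm_le (Φ l x i j) (freeSol b₁ b₂ l x i j)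
          have e4 : ‖Φ l x i j‖ ≤ D + D⁻¹ / 2 := by linarith
          gcongr
        have := e 0
        have := e 1
        linarith
      have := setIntegral_mono_on hint (hci _) measurableSet_Icc hup
      simp only [integral_const, MeasurableSet.univ, measureReal_restrict_apply, univ_inter,
        Real.volume_real_Icc_of_le zero_le_one, sub_zero, one_smul] at this
      linarith
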